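/- Device-independent genuine-negativity bound for the Svetlichny inequality: let ρ be a tripartite quantum state on ι_A × ι_B × ι_C, let A₁, A₂, B₁, B₂, C₁, C₂ be dichotomic observables on the respective factors, and let S be the Svetlichny value. Then for every decomposition ρ = σ_A + σ_B + σ_C into positive semidefinite Hermitian matrices σ_A, σ_B, σ_C, one has N_A(σ_A) + N_B(σ_B) + N_C(σ_C) ≥ (S − 4)/(8·√2 − 8). In particular, the genuine negativity of any state attaining Svetlichny value S is at least (S − 4)/(8·√2 − 8). -/

import Mathlib

open Matrix
open scoped Kronecker ComplexOrder

/-- Partial transpose on the first tensor factor. -/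
def ptA {ιA ιB : Type*} (ρ : Matrix (ιA × ιB) (ιA × ιB) ℂ) : Matrix (ιA × ιB) (ιA × ιB) ℂ :=
  fun p q => ρ (q.1, p.2) (p.1, q.2)

/-- Sum of the absolute values of the negative eigenvalues of a Hermitian matrix
(0 if the matrix is not Hermitian). -/
noncomputable def negEig {ι : Type*} [Fintype ι] [DecidableEq ι] (M : Matrix ι ι ℂ) : ℝ :=
  letI := Classical.dec M.IsHermitian
  if h : M.IsHermitian then ∑ i, max 0 (-(h.eigenvalues i)) else 0

/-- Partial transpose on the second factor of a tripartite space. -/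
def ptB3 {ιA ιB ιC : Type*} (σ : Matrix (ιA × ιB × ιC) (ιA × ιB × ιC) ℂ) :
    Matrix (ιA × ιB × ιC) (ιA × ιB × ιC) ℂ :=
  fun p q => σ (p.1, q.2.1, p.2.2) (q.1, p.2.1, q.2.2)

/-- Partial transpose on the third factor of a tripartite space. -/
def ptC3 {ιA ιB ιC : Type*} (σ : Matrix (ιA × ιB × ιC) (ιA × ιB × ιC) ℂ) :
    Matrix (ιA × ιB × ιC) (ιA × ιB × ιC) ℂ :=
  fun p q => σ (p.1, p.2.1, q.2.2) (q.1, q.2.1, p.2.2)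

/-- The Svetlichny expression for a tripartite state and dichotomic observables. -/
noncomputable def svetlichnyValue {ιA ιB ιC : Type*} [Fintype ιA] [Fintype ιB] [Fintype ιC]
    (ρ : Matrix (ιA × ιB × ιC) (ιA × ιB × ιC) ℂ)
    (A : Fin 2 → Matrix ιA ιA ℂ) (B : Fin 2 → Matrix ιB ιB ℂ) (C : Fin 2 → Matrix ιC ιC ℂ) : ℝ :=
  let E : Fin 2 → Fin 2 → Fin 2 → ℝ := fun x y z =>
    (Matrix.trace (ρ * ((A x) ⊗ₖ ((B y) ⊗ₖ (C z))))).re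
  E 0 0 0 + E 0 0 1 + E 0 1 0 + E 1 0 0 - E 0 1 1 - E 1 0 1 - E 1 1 0 - E 1 1 1

section helpers
set_option linter.unusedSectionVars false
open Polynomial

open scoped MatrixOrder in
lemma trace_mul_nonneg_aux {n : Type*} [Fintype n] [DecidableEq n] {M N : Matrix n n ℂ}
    (hM : M.PosSemidef) (hN : N.PosSemidef) : 0 ≤ (Matrix.trace (M * N)).re := by
  obtain ⟨Y, rfl⟩ : ∃ Y : Matrix n n ℂ, M = Yᴴ * Y :=
    CStarAlgebra.nonneg_iff_eq_star_mul_self.mp (Matrix.nonneg_iff_posSemidef.mpr hM)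
  have h2 : 0 ≤ Matrix.trace (Y * N * Yᴴ) := (hN.mul_mul_conjTranspose_same Y).trace_nonneg
  rw [Matrix.mul_assoc, Matrix.trace_mul_comm]
  exact (Complex.le_def.mp h2).1

open scoped MatrixOrder in
lemma aeval_posSemidef {n : Type*} [Fintype n] [DecidableEq n] (K : Matrix n n ℂ)
    (h : K.IsHermitian) (r : ℝ[X]) (hr : ∀ x ∈ spectrum ℝ K, 0 ≤ r.eval x) :
    (aeval K r).PosSemidef := by
  rw [← Matrix.nonneg_iff_posSemidef]
  have h' : IsSelfAdjoint K := h
  rw [← cfc_polynomial r K]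
  exact cfc_nonneg hr

open scoped MatrixOrder in
lemma spectrum_le_aux {n : Type*} [Fintype n] [DecidableEq n] (K : Matrix n n ℂ)
    (h : K.IsHermitian) (r : ℝ) (hr : (algebraMap ℝ _ r - K).PosSemidef) :
    ∀ x ∈ spectrum ℝ K, x ≤ r := by
  rw [← Matrix.nonneg_iff_posSemidef, sub_nonneg] at hr
  have h' : IsSelfAdjoint K := h
  exact (le_algebraMap_iff_spectrum_le h').mp hr

lemma neg_trace_le_negEig {n : Type*} [Fintype n] [DecidableEq n] (τ M : Matrix n n ℂ)
    (hτ : τ.IsHermitian) (h0 : M.PosSemidef) (h1 : (1 - M).PosSemidef) :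
    -(Matrix.trace (τ * M)).re ≤ negEig τ := by
  unfold negEig
  rw [dif_pos hτ]
  set U : Matrix n n ℂ := (hτ.eigenvectorUnitary : Matrix n n ℂ) with hU
  have hUU : star U * U = 1 := Unitary.coe_star_mul_self hτ.eigenvectorUnitary
  have ht : Matrix.trace (τ * M)
      = ∑ i, ((hτ.eigenvalues i : ℝ) : ℂ) * (Uᴴ * M * U) i i := by
    conv_lhs => rw [hτ.spectral_theorem, Unitary.conjStarAlgAut_apply]
    rw [Matrix.mul_assoc, Matrix.mul_assoc, Matrix.trace_mul_comm, Matrix.mul_assoc,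
      Matrix.mul_assoc, Matrix.trace]
    refine Finset.sum_congr rfl fun i _ => ?_
    rw [Matrix.diag_apply, Matrix.diagonal_mul]
    simp [Matrix.star_eq_conjTranspose, Matrix.mul_assoc, hU]
  have p0 := h0.conjTranspose_mul_mul_same U
  have p1 := h1.conjTranspose_mul_mul_same U
  rw [ht, Complex.re_sum, ← Finset.sum_neg_distrib]
  refine Finset.sum_le_sum fun i _ => ?_
  have q0 := (Complex.le_def.mp (p0.diag_nonneg (i := i))).1
  have q1 := (Complex.le_def.mp (p1.diag_nonneg (i := i))).1
  have e : Uᴴ * (1 - M) * U = 1 - Uᴴ * M * U := by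
    rw [Matrix.mul_sub, Matrix.sub_mul, Matrix.mul_one, ← hUU, Matrix.star_eq_conjTranspose]
  rw [e] at q1
  simp only [Matrix.sub_apply, Matrix.one_apply_eq, Complex.sub_re, Complex.one_re,
    Complex.zero_re] at q0 q1
  rw [Complex.re_ofReal_mul]
  rcases le_total 0 (hτ.eigenvalues i) with hl | hl
  · exact le_max_of_le_left (by nlinarith)
  · exact le_max_of_le_right (by nlinarith)

section pt
variable {α β : Type*}

lemma ptA_add (M N : Matrix (α × β) (α × β) ℂ) : ptA (M + N) = ptA M + ptA N := rfl
lemma ptA_smul (c : ℝ) (M : Matrix (α × β) (α × β) ℂ) : ptA (c • M) = c • ptA M := rfl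
lemma ptA_kron (P : Matrix α α ℂ) (Q : Matrix β β ℂ) : ptA (P ⊗ₖ Q) = Pᵀ ⊗ₖ Q := by
  ext ⟨a, b⟩ ⟨a', b'⟩
  simp [ptA]

variable [Fintype α] [Fintype β] [DecidableEq α] [DecidableEq β]

lemma kron_pow_aux (P : Matrix α α ℂ) (Q : Matrix β β ℂ) (n : ℕ) :
    (P ⊗ₖ Q) ^ n = (P ^ n) ⊗ₖ (Q ^ n) := by
  induction n with
  | zero => simp
  | succ n ih => rw [pow_succ, pow_succ, pow_succ, ih, Matrix.mul_kronecker_mul]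

lemma trace_ptA_mul (M N : Matrix (α × β) (α × β) ℂ) :
    Matrix.trace (ptA M * N) = Matrix.trace (M * ptA N) := by
  simp only [Matrix.trace, Matrix.diag_apply, Matrix.mul_apply, ptA, Fintype.sum_prod_type]
  have : ∀ a : α, (∑ b, ∑ a', ∑ b', M (a', b) (a, b') * N (a', b') (a, b))
      = ∑ a', ∑ b, ∑ b', M (a', b) (a, b') * N (a', b') (a, b) := fun a => Finset.sum_comm
  simp only [this]
  rw [Finset.sum_comm]
  refine Finset.sum_congr rfl fun a _ => ?_
  rw [Finset.sum_comm]

lemma ptA_aeval (x : Matrix α α ℂ) (y : Matrix β β ℂ) (p : ℝ[X]) :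
    ptA (aeval (x ⊗ₖ y) p) = aeval (xᵀ ⊗ₖ y) p := by
  induction p using Polynomial.induction_on' with
  | add p q hp hq => rw [map_add, map_add, ptA_add, hp, hq]
  | monomial n a =>
    rw [aeval_monomial, aeval_monomial, ← Algebra.smul_def, ← Algebra.smul_def, ptA_smul,
      kron_pow_aux, kron_pow_aux, ptA_kron, Matrix.transpose_pow]

lemma ptA_aeval_mul (x P : Matrix α α ℂ) (y Q : Matrix β β ℂ) (p : ℝ[X])
    (h : Pᵀ * xᵀ = -xᵀ * Pᵀ) :
    ptA (aeval (x ⊗ₖ y) p * (P ⊗ₖ Q)) = aeval (-(xᵀ ⊗ₖ y)) p * (Pᵀ ⊗ₖ Q) := by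
  have hn : ∀ n : ℕ, Pᵀ * xᵀ ^ n = (-xᵀ) ^ n * Pᵀ := fun n =>
    (SemiconjBy.pow_right (show SemiconjBy Pᵀ xᵀ (-xᵀ) from h) n)
  have e : -(xᵀ ⊗ₖ y) = (-xᵀ) ⊗ₖ y := by
    ext ⟨a, b⟩ ⟨a', b'⟩; simp
  rw [e]
  induction p using Polynomial.induction_on' with
  | add p q hp hq => rw [map_add, map_add, add_mul, add_mul, ptA_add, hp, hq]
  | monomial n a =>
    rw [aeval_monomial, aeval_monomial, ← Algebra.smul_def, ← Algebra.smul_def,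
      smul_mul_assoc, smul_mul_assoc, ptA_smul,
      kron_pow_aux, kron_pow_aux, ← Matrix.mul_kronecker_mul, ptA_kron, Matrix.transpose_mul,
      Matrix.transpose_pow, hn, Matrix.mul_kronecker_mul]

/-- The CHSH operator. -/
noncomputable def chshOp (P0 P1 : Matrix α α ℂ) (Q0 Q1 : Matrix β β ℂ) :
    Matrix (α × β) (α × β) ℂ :=
  P0 ⊗ₖ (Q0 + Q1) + P1 ⊗ₖ (Q0 - Q1)

lemma kron_herm {P : Matrix α α ℂ} {Q : Matrix β β ℂ} (hP : P.IsHermitian)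
    (hQ : Q.IsHermitian) : (P ⊗ₖ Q).IsHermitian := by
  rw [Matrix.IsHermitian, Matrix.conjTranspose_kronecker, hP, hQ]

variable {P0 P1 : Matrix α α ℂ} {Q0 Q1 : Matrix β β ℂ}

lemma chsh_herm (hP0 : P0.IsHermitian) (hP1 : P1.IsHermitian) (hQ0 : Q0.IsHermitian)
    (hQ1 : Q1.IsHermitian) : (chshOp P0 P1 Q0 Q1).IsHermitian :=
  (kron_herm hP0 (hQ0.add hQ1)).add (kron_herm hP1 (hQ0.sub hQ1))

lemma chsh_sq (hP0 : P0 * P0 = 1) (hP1 : P1 * P1 = 1) (hQ0 : Q0 * Q0 = 1) (hQ1 : Q1 * Q1 = 1) :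
    chshOp P0 P1 Q0 Q1 ^ 2 = 4 - (P0 * P1 - P1 * P0) ⊗ₖ (Q0 * Q1 - Q1 * Q0) := by
  have e1 : (Q0 + Q1) * (Q0 + Q1) = 2 + (Q0 * Q1 + Q1 * Q0) := by
    rw [add_mul, mul_add, mul_add, hQ0, hQ1, ← one_add_one_eq_two]; abel
  have e2 : (Q0 - Q1) * (Q0 - Q1) = 2 - (Q0 * Q1 + Q1 * Q0) := by
    rw [sub_mul, mul_sub, mul_sub, hQ0, hQ1, ← one_add_one_eq_two]; abel
  have e3 : (Q0 + Q1) * (Q0 - Q1) = -(Q0 * Q1 - Q1 * Q0) := by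
    rw [add_mul, mul_sub, mul_sub, hQ0, hQ1]; abel
  have e4 : (Q0 - Q1) * (Q0 + Q1) = (Q0 * Q1 - Q1 * Q0) := by
    rw [sub_mul, mul_add, mul_add, hQ0, hQ1]; abel
  have e5 : (4 : Matrix (α × β) (α × β) ℂ) = (1 : Matrix α α ℂ) ⊗ₖ (2 : Matrix β β ℂ)
      + (1 : Matrix α α ℂ) ⊗ₖ (2 : Matrix β β ℂ) := by
    rw [← Matrix.kronecker_add]
    ext ⟨a, b⟩ ⟨a', b'⟩
    by_cases h : b = b' <;> by_cases h' : a = a' <;>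
      simp [Matrix.ofNat_apply, h, h']
    norm_num
  rw [chshOp, pow_two, add_mul, mul_add, mul_add]
  simp only [← Matrix.mul_kronecker_mul]
  rw [hP0, hP1, e1, e2, e3, e4, e5]
  ext ⟨a, b⟩ ⟨a', b'⟩
  simp only [Matrix.add_apply, Matrix.sub_apply, Matrix.kronecker_apply, Matrix.neg_apply]
  ring

lemma sq_psd {n : Type*} [Fintype n] {M : Matrix n n ℂ} (h : M.IsHermitian) :
    (M * M).PosSemidef := by
  have := Matrix.posSemidef_conjTranspose_mul_self M
  rwa [h] at this

lemma chsh_le (hP0 : P0.IsHermitian) (hP1 : P1.IsHermitian) (hQ0 : Q0.IsHermitian)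
    (hQ1 : Q1.IsHermitian)
    (sP0 : P0 * P0 = 1) (sP1 : P1 * P1 = 1) (sQ0 : Q0 * Q0 = 1) (sQ1 : Q1 * Q1 = 1) :
    ∀ x ∈ spectrum ℝ (chshOp P0 P1 Q0 Q1), x ≤ 2 * √2 := by
  apply spectrum_le_aux _ (chsh_herm hP0 hP1 hQ0 hQ1)
  have h2 : ((√2 : ℝ) : ℂ) * ((√2 : ℝ) : ℂ) = 2 := by
    rw [← Complex.ofReal_mul, Real.mul_self_sqrt (by norm_num)]; simp
  set s : ℝ := √2 with hs
  have hspos : 0 < s := by positivity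
  have e1 : (Q0 + Q1) * (Q0 + Q1) + (Q0 - Q1) * (Q0 - Q1) = 4 := by
    have : (Q0 + Q1) * (Q0 + Q1) + (Q0 - Q1) * (Q0 - Q1)
      = (Q0 * Q0 + Q0 * Q0) + (Q1 * Q1 + Q1 * Q1) := by noncomm_ring
    rw [this, sQ0, sQ1]; norm_num
  have key : ∀ (P : Matrix α α ℂ) (R : Matrix β β ℂ), P * P = 1 →
      (s • (P ⊗ₖ (1 : Matrix β β ℂ)) - (1 : Matrix α α ℂ) ⊗ₖ R) *
      (s • (P ⊗ₖ (1 : Matrix β β ℂ)) - (1 : Matrix α α ℂ) ⊗ₖ R)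
      = (2 : ℝ) • (1 : Matrix (α × β) (α × β) ℂ) - (2 * s) • (P ⊗ₖ R)
        + (1 : Matrix α α ℂ) ⊗ₖ (R * R) := by
    intro P R hP
    simp only [sub_mul, mul_sub, smul_mul_assoc, mul_smul_comm, ← Matrix.mul_kronecker_mul,
      hP, Matrix.one_mul, Matrix.mul_one, Matrix.one_kronecker_one, smul_sub, smul_smul]
    rw [show s * s = 2 from Real.mul_self_sqrt (by norm_num)]
    module
  have herm : ∀ (P : Matrix α α ℂ) (R : Matrix β β ℂ), P.IsHermitian → R.IsHermitian →
      (s • (P ⊗ₖ (1 : Matrix β β ℂ)) - (1 : Matrix α α ℂ) ⊗ₖ R).IsHermitian := by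
    intro P R hP hR
    refine Matrix.IsHermitian.sub ?_ (kron_herm Matrix.isHermitian_one hR)
    have := kron_herm hP (Matrix.isHermitian_one (n := β) (α := ℂ))
    rw [Matrix.IsHermitian, Matrix.conjTranspose_smul, this]
    simp
  have hsum := ((sq_psd (herm P0 (Q0 + Q1) hP0 (hQ0.add hQ1))).add
    (sq_psd (herm P1 (Q0 - Q1) hP1 (hQ0.sub hQ1)))).smul
      (show (0 : ℝ) ≤ 1 / (2 * s) by positivity)
  convert hsum using 1
  rw [key _ _ sP0, key _ _ sP1]
  have e2 : (1 : Matrix α α ℂ) ⊗ₖ ((Q0 + Q1) * (Q0 + Q1))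
      + (1 : Matrix α α ℂ) ⊗ₖ ((Q0 - Q1) * (Q0 - Q1)) = (4 : ℝ) • 1 := by
    rw [← Matrix.kronecker_add, e1]
    ext ⟨a, b⟩ ⟨a', b'⟩
    by_cases h : b = b' <;> by_cases h' : a = a' <;>
      simp [Matrix.ofNat_apply, h, h']
  have e3 : (2 : ℝ) • (1 : Matrix (α × β) (α × β) ℂ) - (2 * s) • (P0 ⊗ₖ (Q0 + Q1))
        + (1 : Matrix α α ℂ) ⊗ₖ ((Q0 + Q1) * (Q0 + Q1)) +
      ((2 : ℝ) • (1 : Matrix (α × β) (α × β) ℂ) - (2 * s) • (P1 ⊗ₖ (Q0 - Q1))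
        + (1 : Matrix α α ℂ) ⊗ₖ ((Q0 - Q1) * (Q0 - Q1)))
      = (8 : ℝ) • 1 - (2 * s) • chshOp P0 P1 Q0 Q1 := by
    have : (8 : ℝ) • (1 : Matrix (α × β) (α × β) ℂ)
      = (2 : ℝ) • 1 + (2 : ℝ) • 1 + (4 : ℝ) • 1 := by module
    rw [this, ← e2, chshOp]
    module
  rw [e3, smul_sub, smul_smul, smul_smul, Algebra.algebraMap_eq_smul_one]
  have a1 : 1 / (2 * s) * 8 = 2 * s := by
    have : s * s = 2 := Real.mul_self_sqrt (by norm_num)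
    field_simp; nlinarith
  have a2 : 1 / (2 * s) * (2 * s) = 1 := by field_simp
  rw [a1, a2, one_smul]

lemma neg_kron_aux (P : Matrix α α ℂ) (Q : Matrix β β ℂ) : (-P) ⊗ₖ Q = -(P ⊗ₖ Q) := by
  ext ⟨a, b⟩ ⟨a', b'⟩; simp

lemma chsh_spec (hP0 : P0.IsHermitian) (hP1 : P1.IsHermitian) (hQ0 : Q0.IsHermitian)
    (hQ1 : Q1.IsHermitian)
    (sP0 : P0 * P0 = 1) (sP1 : P1 * P1 = 1) (sQ0 : Q0 * Q0 = 1) (sQ1 : Q1 * Q1 = 1) :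
    ∀ x ∈ spectrum ℝ (chshOp P0 P1 Q0 Q1), |x| ≤ 2 * √2 := by
  intro x hx
  refine abs_le.mpr ⟨?_, chsh_le hP0 hP1 hQ0 hQ1 sP0 sP1 sQ0 sQ1 x hx⟩
  have h := chsh_le hP0.neg hP1.neg hQ0 hQ1 (by simpa using sP0) (by simpa using sP1) sQ0 sQ1 (-x)
  have e : chshOp (-P0) (-P1) Q0 Q1 = -chshOp P0 P1 Q0 Q1 := by
    simp only [chshOp, neg_kron_aux]; abel
  rw [e, ← spectrum.neg_eq, Set.neg_mem_neg] at h
  linarith [h hx]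

lemma comm_anti (hP0 : P0 * P0 = 1) (hP1 : P1 * P1 = 1) :
    P0 * (P0 * P1 - P1 * P0) = -(P0 * P1 - P1 * P0) * P0 ∧
    P1 * (P0 * P1 - P1 * P0) = -(P0 * P1 - P1 * P0) * P1 := by
  constructor
  · rw [mul_sub, neg_mul, sub_mul, Matrix.mul_assoc P1 P0 P0, hP0, ← Matrix.mul_assoc P0 P0 P1,
      hP0, Matrix.one_mul, Matrix.mul_one, ← Matrix.mul_assoc]
    abel
  · rw [mul_sub, neg_mul, sub_mul, Matrix.mul_assoc P0 P1 P1, hP1, ← Matrix.mul_assoc P1 P1 P0,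
      hP1, Matrix.one_mul, Matrix.mul_one, ← Matrix.mul_assoc]
    abel

/-- The even part of the witness function. -/
noncomputable def wit0 (d : ℝ) : ℝ := max (√(4 + d) - 2) 0 / (4 * √2 - 4)

/-- The odd part of the witness function. -/
noncomputable def wit1 (d : ℝ) : ℝ := -wit0 d / √(4 + d)

lemma sqrt_two_gt : (1 : ℝ) < √2 := by
  rw [Real.lt_sqrt] <;> norm_num

lemma sqrt_abs_aux (k : ℝ) : √(4 + (k ^ 2 - 4)) = |k| := by
  rw [← Real.sqrt_sq_eq_abs]; congr 1; ring

lemma wit_bounds (k : ℝ) (hk : |k| ≤ 2 * √2) :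
    0 ≤ wit0 (k ^ 2 - 4) + wit1 (k ^ 2 - 4) * k ∧
    wit0 (k ^ 2 - 4) + wit1 (k ^ 2 - 4) * k ≤ 1 := by
  have h1 := sqrt_two_gt
  have hc : 0 < 4 * √2 - 4 := by linarith
  unfold wit1
  have h0 : 0 ≤ wit0 (k ^ 2 - 4) := by unfold wit0; positivity
  have h2 : wit0 (k ^ 2 - 4) ≤ 1 / 2 := by
    unfold wit0
    rw [sqrt_abs_aux, div_le_iff₀ hc]
    exact max_le (by linarith) (by linarith)
  rw [sqrt_abs_aux]
  generalize wit0 (k ^ 2 - 4) = w at *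
  rcases lt_trichotomy k 0 with h | h | h
  · rw [abs_of_neg h]
    have : -w / -k * k = w := by have := h.ne; field_simp
    rw [this]; constructor <;> linarith
  · subst h; simp; constructor <;> linarith
  · rw [abs_of_pos h]
    have : -w / k * k = -w := by have := h.ne'; field_simp
    rw [this]; constructor <;> linarith

lemma wit_dual (k : ℝ) :
    0 ≤ 2 - k - (4 * √2 - 4) * (wit0 (4 - k ^ 2) + wit1 (k ^ 2 - 4) * k) := by
  have h1 := sqrt_two_gt
  have hc : 0 < 4 * √2 - 4 := by linarith
  have e0 : ∀ d, (4 * √2 - 4) * wit0 d = max (√(4 + d) - 2) 0 := by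
    intro d; unfold wit0; exact mul_div_cancel₀ _ hc.ne'
  have e1 : ∀ d, (4 * √2 - 4) * wit1 d = - max (√(4 + d) - 2) 0 / √(4 + d) := by
    intro d; rw [← e0]; unfold wit1; ring
  rw [mul_add, ← mul_assoc, e0, e1, sqrt_abs_aux]
  rcases le_or_gt |k| 2 with h | h
  · rw [max_eq_right (by linarith : |k| - 2 ≤ 0)]
    have hk := abs_le.mp h
    have : √(4 + (4 - k ^ 2)) ≤ 4 - k := by
      rw [Real.sqrt_le_left (by linarith)]
      nlinarith [sq_nonneg (k - 2)]
    have : max (√(4 + (4 - k ^ 2)) - 2) 0 ≤ 2 - k := max_le (by linarith) (by linarith)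
    rw [neg_zero, zero_div, zero_mul]; linarith
  · rw [max_eq_left (by linarith : 0 ≤ |k| - 2)]
    have h4 : 4 < k ^ 2 := by rw [← sq_abs]; nlinarith
    have : √(4 + (4 - k ^ 2)) ≤ 2 := by
      rw [Real.sqrt_le_left (by norm_num)]; linarith
    rw [max_eq_right (by linarith)]
    rcases abs_cases k with ⟨e, h'⟩ | ⟨e, h'⟩
    · rw [e] at h ⊢
      have : -(k - 2) / k * k = -(k - 2) := by
        have : k ≠ 0 := by linarith
        field_simp
      rw [this]; linarith
    · rw [e] at h ⊢
      have : -(-k - 2) / -k * k = (-k - 2) := by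
        have : k ≠ 0 := by linarith
        field_simp
      rw [this]; linarith

lemma chsh_witness (hP0 : P0.IsHermitian) (hP1 : P1.IsHermitian) (hQ0 : Q0.IsHermitian)
    (hQ1 : Q1.IsHermitian)
    (sP0 : P0 * P0 = 1) (sP1 : P1 * P1 = 1) (sQ0 : Q0 * Q0 = 1) (sQ1 : Q1 * Q1 = 1) :
    ∃ M : Matrix (α × β) (α × β) ℂ, M.PosSemidef ∧ (1 - M).PosSemidef ∧
      ((2 : ℝ) • (1 : Matrix (α × β) (α × β) ℂ) - chshOp P0 P1 Q0 Q1
        - (4 * √2 - 4) • ptA M).PosSemidef := by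
  have sP0' : P0ᵀ * P0ᵀ = 1 := by rw [← Matrix.transpose_mul, sP0, Matrix.transpose_one]
  have sP1' : P1ᵀ * P1ᵀ = 1 := by rw [← Matrix.transpose_mul, sP1, Matrix.transpose_one]
  have sqK := chsh_sq sP0 sP1 sQ0 sQ1
  have sqK' := chsh_sq sP0' sP1' sQ0 sQ1
  have hK := chsh_herm hP0 hP1 hQ0 hQ1
  have hK' := chsh_herm hP0.transpose hP1.transpose hQ0 hQ1
  have spK' := chsh_spec hP0.transpose hP1.transpose hQ0 hQ1 sP0' sP1' sQ0 sQ1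
  set K := chshOp P0 P1 Q0 Q1 with hKdef
  set K' := chshOp P0ᵀ P1ᵀ Q0 Q1 with hKdef'
  set d : Matrix α α ℂ := -(P0ᵀ * P1ᵀ - P1ᵀ * P0ᵀ) with hd
  set y : Matrix β β ℂ := Q0 * Q1 - Q1 * Q0 with hy
  have hdT : dᵀ = P0 * P1 - P1 * P0 := by
    simp [hd, Matrix.transpose_sub, Matrix.transpose_mul]
  have eD' : K' ^ 2 - 4 = d ⊗ₖ y := by
    rw [sqK', hd, neg_kron_aux]; abel
  have eD : 4 - K ^ 2 = dᵀ ⊗ₖ y := by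
    rw [sqK, hdT]; abel
  have eDn : K ^ 2 - 4 = -(dᵀ ⊗ₖ y) := by
    rw [← eD]; abel
  have fK : (spectrum ℝ K).Finite := Matrix.finite_real_spectrum
  have fK' : (spectrum ℝ K').Finite := Matrix.finite_real_spectrum
  set F : Finset ℝ := (fK.toFinset ∪ fK'.toFinset).image (fun k => k ^ 2 - 4) ∪
    (fK.toFinset ∪ fK'.toFinset).image (fun k => 4 - k ^ 2) with hF
  have interp : ∀ f : ℝ → ℝ, ∃ p : ℝ[X], ∀ x ∈ F, p.eval x = f x := fun f =>
    ⟨Lagrange.interpolate F id f, fun x hx =>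
      Lagrange.eval_interpolate_at_node (v := id) f Function.injective_id.injOn hx⟩
  obtain ⟨p, hp⟩ := interp wit0
  obtain ⟨q, hq⟩ := interp wit1
  set r : ℝ[X] := p.comp (X ^ 2 - 4) + q.comp (X ^ 2 - 4) * X with hr
  set r2 : ℝ[X] := p.comp (4 - X ^ 2) + q.comp (X ^ 2 - 4) * X with hr2
  have ar : aeval K' r = aeval (d ⊗ₖ y) p + aeval (d ⊗ₖ y) q * K' := by
    rw [← eD']
    simp [hr, aeval_comp, map_ofNat (aeval K') 4]
  have ar2 : aeval K r2 = aeval (dᵀ ⊗ₖ y) p + aeval (-(dᵀ ⊗ₖ y)) q * K := by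
    rw [← eDn, ← eD]
    simp [hr2, aeval_comp, map_ofNat (aeval K) 4]
  have hpt : ptA (aeval K' r) = aeval K r2 := by
    rw [ar, ar2, ptA_add, ptA_aeval, hKdef', hKdef, chshOp, chshOp, mul_add, mul_add, ptA_add,
      ptA_aeval_mul, ptA_aeval_mul, Matrix.transpose_transpose, Matrix.transpose_transpose]
    · rw [hdT, Matrix.transpose_transpose]
      exact (comm_anti sP0 sP1).2
    · rw [hdT, Matrix.transpose_transpose]
      exact (comm_anti sP0 sP1).1
  have er : ∀ k ∈ spectrum ℝ K', r.eval k = wit0 (k ^ 2 - 4) + wit1 (k ^ 2 - 4) * k := by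
    intro k hk
    have m : k ^ 2 - 4 ∈ F := by
      refine Finset.mem_union_left _ (Finset.mem_image_of_mem _ (Finset.mem_union_right _ ?_))
      simpa using hk
    rw [← hp _ m, ← hq _ m]
    simp [hr, eval_comp]
  have er2 : ∀ k ∈ spectrum ℝ K, r2.eval k = wit0 (4 - k ^ 2) + wit1 (k ^ 2 - 4) * k := by
    intro k hk
    have m : k ^ 2 - 4 ∈ F := by
      refine Finset.mem_union_left _ (Finset.mem_image_of_mem _ (Finset.mem_union_left _ ?_))
      simpa using hk
    have m2 : 4 - k ^ 2 ∈ F := by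
      refine Finset.mem_union_right _
        (Finset.mem_image_of_mem (fun k : ℝ => 4 - k ^ 2) (Finset.mem_union_left _ ?_))
      simpa using hk
    rw [← hp _ m2, ← hq _ m]
    simp [hr2, eval_comp]
  refine ⟨aeval K' r, ?_, ?_, ?_⟩
  · refine aeval_posSemidef _ hK' _ fun k hk => ?_
    rw [er k hk]
    exact (wit_bounds k (spK' k hk)).1
  · have : 1 - aeval K' r = aeval K' (1 - r) := by simp
    rw [this]
    refine aeval_posSemidef _ hK' _ fun k hk => ?_
    rw [eval_sub, eval_one, er k hk]
    linarith [(wit_bounds k (spK' k hk)).2]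
  · rw [hpt]
    have : (2 : ℝ) • (1 : Matrix (α × β) (α × β) ℂ) - K - (4 * √2 - 4) • aeval K r2
        = aeval K ((2 : ℝ) • (1 : ℝ[X]) - X - (4 * √2 - 4) • r2) := by
      simp only [map_sub, map_smul, map_one, aeval_X]
    rw [this]
    refine aeval_posSemidef _ hK _ fun k hk => ?_
    have := wit_dual k
    simp only [eval_sub, eval_smul, eval_one, eval_X, smul_eq_mul, mul_one, er2 k hk]
    exact this

lemma ptA_herm {M : Matrix (α × β) (α × β) ℂ} (h : M.IsHermitian) : (ptA M).IsHermitian := by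
  ext ⟨a, b⟩ ⟨a', b'⟩
  simp only [Matrix.conjTranspose_apply, ptA]
  exact h.apply _ _

lemma trace_submatrix_aux {ι κ : Type*} [Fintype ι] [Fintype κ] (e : ι ≃ κ)
    (M : Matrix κ κ ℂ) : Matrix.trace (M.submatrix e e) = Matrix.trace M := by
  simp only [Matrix.trace, Matrix.diag_apply, Matrix.submatrix_apply]
  exact e.sum_comp (fun i => M i i)

lemma chsh_bound {ι : Type*} [Fintype ι] [DecidableEq ι] (e : ι ≃ α × β)
    (σ τ : Matrix ι ι ℂ) (hσ : σ.PosSemidef)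
    (hτ : τ = (ptA (σ.submatrix e.symm e.symm)).submatrix e e)
    (hP0 : P0.IsHermitian ∧ P0 * P0 = 1) (hP1 : P1.IsHermitian ∧ P1 * P1 = 1)
    (hQ0 : Q0.IsHermitian ∧ Q0 * Q0 = 1) (hQ1 : Q1.IsHermitian ∧ Q1 * Q1 = 1) :
    (Matrix.trace (σ * (chshOp P0 P1 Q0 Q1).submatrix e e)).re
      ≤ 2 * (Matrix.trace σ).re + (4 * √2 - 4) * negEig τ := by
  obtain ⟨M, h0, h1, h2⟩ := chsh_witness hP0.1 hP1.1 hQ0.1 hQ1.1 hP0.2 hP1.2 hQ0.2 hQ1.2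
  have hc : 0 < 4 * √2 - 4 := by linarith [sqrt_two_gt]
  set s := σ.submatrix e.symm e.symm with hs
  have hsσ : σ = s.submatrix e e := by
    ext i j; simp [hs]
  have hsp : s.PosSemidef := hσ.submatrix _
  have hth : τ.IsHermitian := by
    rw [hτ]; exact (ptA_herm hsp.1).submatrix _
  have n1 := neg_trace_le_negEig τ (M.submatrix e e) hth (h0.submatrix e) (by
    have := h1.submatrix e
    rwa [Matrix.submatrix_sub, Pi.sub_apply, Pi.sub_apply, Matrix.submatrix_one_equiv] at this)
  rw [hτ, Matrix.submatrix_mul_equiv, trace_submatrix_aux, trace_ptA_mul, ← hτ] at n1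
  have n2 := trace_mul_nonneg_aux hsp h2
  rw [hsσ, Matrix.submatrix_mul_equiv, trace_submatrix_aux, trace_submatrix_aux]
  simp only [mul_sub, Matrix.mul_smul, Matrix.mul_one, Matrix.trace_sub, Matrix.trace_smul,
    Complex.sub_re, Complex.smul_re, smul_eq_mul] at n2
  nlinarith

lemma kron_dich {P : Matrix α α ℂ} {Q : Matrix β β ℂ} (hP : P.IsHermitian ∧ P * P = 1)
    (hQ : Q.IsHermitian ∧ Q * Q = 1) : (P ⊗ₖ Q).IsHermitian ∧ (P ⊗ₖ Q) * (P ⊗ₖ Q) = 1 :=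
  ⟨kron_herm hP.1 hQ.1, by
    rw [← Matrix.mul_kronecker_mul, hP.2, hQ.2, Matrix.one_kronecker_one]⟩

lemma neg_dich {P : Matrix α α ℂ} (hP : P.IsHermitian ∧ P * P = 1) :
    (-P).IsHermitian ∧ (-P) * (-P) = 1 :=
  ⟨hP.1.neg, by rw [neg_mul_neg, hP.2]⟩

lemma two_chsh_bound {ι : Type*} [Fintype ι] [DecidableEq ι] (e : ι ≃ α × β)
    (σ τ W : Matrix ι ι ℂ) (hσ : σ.PosSemidef)
    (hτ : τ = (ptA (σ.submatrix e.symm e.symm)).submatrix e e)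
    {R0 R1 : Matrix β β ℂ}
    (hP0 : P0.IsHermitian ∧ P0 * P0 = 1) (hP1 : P1.IsHermitian ∧ P1 * P1 = 1)
    (hQ0 : Q0.IsHermitian ∧ Q0 * Q0 = 1) (hQ1 : Q1.IsHermitian ∧ Q1 * Q1 = 1)
    (hR0 : R0.IsHermitian ∧ R0 * R0 = 1) (hR1 : R1.IsHermitian ∧ R1 * R1 = 1)
    (hW : W = (chshOp P0 P1 Q0 Q1).submatrix e e + (chshOp (-P1) P0 R0 R1).submatrix e e) :
    (Matrix.trace (σ * W)).re
      ≤ 4 * (Matrix.trace σ).re + (8 * √2 - 8) * negEig τ := by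
  have h1 := chsh_bound e σ τ hσ hτ hP0 hP1 hQ0 hQ1
  have h2 := chsh_bound e σ τ hσ hτ (neg_dich hP1) hP0 hR0 hR1
  rw [hW, mul_add, Matrix.trace_add, Complex.add_re]
  linarith

end pt

/-- The Svetlichny operator. -/
noncomputable def svetOp {ιA ιB ιC : Type*}
    (A : Fin 2 → Matrix ιA ιA ℂ) (B : Fin 2 → Matrix ιB ιB ℂ) (C : Fin 2 → Matrix ιC ιC ℂ) :
    Matrix (ιA × ιB × ιC) (ιA × ιB × ιC) ℂ :=
  A 0 ⊗ₖ (B 0 ⊗ₖ C 0) + A 0 ⊗ₖ (B 0 ⊗ₖ C 1) + A 0 ⊗ₖ (B 1 ⊗ₖ C 0) + A 1 ⊗ₖ (B 0 ⊗ₖ C 0)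
    - A 0 ⊗ₖ (B 1 ⊗ₖ C 1) - A 1 ⊗ₖ (B 0 ⊗ₖ C 1) - A 1 ⊗ₖ (B 1 ⊗ₖ C 0) - A 1 ⊗ₖ (B 1 ⊗ₖ C 1)

lemma svet_eq {ιA ιB ιC : Type*} [Fintype ιA] [Fintype ιB] [Fintype ιC]
    (ρ : Matrix (ιA × ιB × ιC) (ιA × ιB × ιC) ℂ)
    (A : Fin 2 → Matrix ιA ιA ℂ) (B : Fin 2 → Matrix ιB ιB ℂ) (C : Fin 2 → Matrix ιC ιC ℂ) :
    svetlichnyValue ρ A B C = (Matrix.trace (ρ * svetOp A B C)).re := by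
  simp only [svetlichnyValue, svetOp, mul_add, mul_sub, Matrix.trace_add, Matrix.trace_sub,
    Complex.add_re, Complex.sub_re]

/-- Move the second factor to the front. -/
def equivB (ιA ιB ιC : Type*) : ιA × ιB × ιC ≃ ιB × ιA × ιC where
  toFun p := (p.2.1, p.1, p.2.2)
  invFun p := (p.2.1, p.1, p.2.2)
  left_inv _ := rfl
  right_inv _ := rfl

/-- Move the third factor to the front. -/
def equivC (ιA ιB ιC : Type*) : ιA × ιB × ιC ≃ ιC × ιA × ιB where
  toFun p := (p.2.2, p.1, p.2.1)
  invFun p := (p.2.1, p.2.2, p.1)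
  left_inv _ := rfl
  right_inv _ := rfl

end helpers

/-- device-independent genuine-negativity bound for the Svetlichny
inequality. Every decomposition ρ = σ_A + σ_B + σ_C into positive semidefinite parts
has total bipartite negativity at least (S - 4)/(8√2 - 8); hence the genuine negativity
of any state attaining Svetlichny value S is at least (S - 4)/(8√2 - 8). -/
theorem svetlichny_genuine_negativity_bound
    {ιA ιB ιC : Type*} [Fintype ιA] [Fintype ιB] [Fintype ιC]
    [Nonempty ιA] [Nonempty ιB] [Nonempty ιC]
    [DecidableEq ιA] [DecidableEq ιB] [DecidableEq ιC]
    (ρ : Matrix (ιA × ιB × ιC) (ιA × ιB × ιC) ℂ) (hρ : ρ.PosSemidef)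
    (htr : Matrix.trace ρ = 1)
    (A : Fin 2 → Matrix ιA ιA ℂ) (B : Fin 2 → Matrix ιB ιB ℂ) (C : Fin 2 → Matrix ιC ιC ℂ)
    (hA : ∀ x, (A x).IsHermitian ∧ A x * A x = 1)
    (hB : ∀ y, (B y).IsHermitian ∧ B y * B y = 1)
    (hC : ∀ z, (C z).IsHermitian ∧ C z * C z = 1)
    (S : ℝ) (hS : S = svetlichnyValue ρ A B C) :
    ∀ σA σB σC : Matrix (ιA × ιB × ιC) (ιA × ιB × ιC) ℂ,
      σA.PosSemidef → σB.PosSemidef → σC.PosSemidef → ρ = σA + σB + σC →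
      negEig (ptA σA) + negEig (ptB3 σB) + negEig (ptC3 σC) ≥
        (S - 4) / (8 * Real.sqrt 2 - 8) := by
  intro σA σB σC pA pB pC hsum
  have bA := two_chsh_bound (Equiv.refl _) σA (ptA σA) (svetOp A B C) pA rfl (hA 0) (hA 1)
    (kron_dich (hB 0) (hC 0)) (kron_dich (hB 0) (hC 1))
    (kron_dich (hB 1) (hC 0)) (kron_dich (hB 1) (hC 1)) (by
      ext ⟨a, b, c⟩ ⟨a', b', c'⟩
      simp [svetOp, chshOp]
      ring)
  have bB := two_chsh_bound (equivB ιA ιB ιC) σB (ptB3 σB) (svetOp A B C) pB rfl (hB 0) (hB 1)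
    (kron_dich (hA 0) (hC 0)) (kron_dich (hA 0) (hC 1))
    (kron_dich (hA 1) (hC 0)) (kron_dich (hA 1) (hC 1)) (by
      ext ⟨a, b, c⟩ ⟨a', b', c'⟩
      simp [svetOp, chshOp, equivB]
      ring)
  have bC := two_chsh_bound (equivC ιA ιB ιC) σC (ptC3 σC) (svetOp A B C) pC rfl (hC 0) (hC 1)
    (kron_dich (hA 0) (hB 0)) (kron_dich (hA 0) (hB 1))
    (kron_dich (hA 1) (hB 0)) (kron_dich (hA 1) (hB 1)) (by
      ext ⟨a, b, c⟩ ⟨a', b', c'⟩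
      simp [svetOp, chshOp, equivC]
      ring)
  have ht : (Matrix.trace σA).re + (Matrix.trace σB).re + (Matrix.trace σC).re = 1 := by
    rw [hsum, Matrix.trace_add, Matrix.trace_add] at htr
    simpa using congrArg Complex.re htr
  have hc : 0 < 8 * √2 - 8 := by linarith [sqrt_two_gt]
  rw [ge_iff_le, div_le_iff₀ hc, hS, svet_eq, hsum, add_mul, add_mul, Matrix.trace_add,
    Matrix.trace_add, Complex.add_re, Complex.add_re]
  linarith
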